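/- arXiv:1204.4992 — 4 statements merged into one kernel-verified Lean document; each statement's English description precedes it below -/
import Mathlib

section
/- Let (W,S) be a finite Coxeter system, J, K ⊆ S, and w ∈ W. Then the intersection of the double coset W_J·w·W_K with W^K contains a unique minimal element w_min and a unique maximal element w_max with respect to the Bruhat order. -/
/-- The Bruhat order on a Coxeter group: `u ≤ v` iff some reduced word for `v`
contains a subword that is a reduced word for `u`. -/
def CoxeterSystem.bruhatLE {B W : Type*} [Group W] {M : CoxeterMatrix B}
    (cs : CoxeterSystem M W) (u v : W) : Prop :=
  ∃ l : List B, cs.IsReduced l ∧ cs.wordProd l = v ∧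
    ∃ l' : List B, l'.Sublist l ∧ cs.IsReduced l' ∧ cs.wordProd l' = u

/-- The standard parabolic subgroup `W_J` generated by the simple reflections
indexed by `J`. -/
def CoxeterSystem.parabolic {B W : Type*} [Group W] {M : CoxeterMatrix B}
    (cs : CoxeterSystem M W) (J : Set B) : Subgroup W :=
  Subgroup.closure (cs.simple '' J)

/-- `W^K` : the set of elements of minimal length in their coset `w · W_K`. -/
def CoxeterSystem.minLengthReps {B W : Type*} [Group W] {M : CoxeterMatrix B}
    (cs : CoxeterSystem M W) (K : Set B) : Set W :=
  {w | ∀ u ∈ cs.parabolic K, cs.length w ≤ cs.length (w * u)}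

/-- The double coset `W_J · w · W_K`. -/
def CoxeterSystem.doubleCoset {B W : Type*} [Group W] {M : CoxeterMatrix B}
    (cs : CoxeterSystem M W) (J K : Set B) (w : W) : Set W :=
  {x | ∃ p ∈ cs.parabolic J, ∃ q ∈ cs.parabolic K, x = p * w * q}

namespace BruhatAux

open CoxeterSystem List

variable {B W : Type*} [Group W] {M : CoxeterMatrix B} (cs : CoxeterSystem M W)

open Classical in
/-- The basic involution on `W × ZMod 2` used to track parities of inversions. -/
noncomputable def sig (i : B) : Function.End (W × ZMod 2) :=
  fun p => (cs.simple i * p.1 * (cs.simple i)⁻¹, p.2 + if p.1 = cs.simple i then 1 else 0)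

open Classical in
theorem sig_word (ω : List B) (p : W × ZMod 2) :
    ((ω.map (sig cs)).prod : Function.End (W × ZMod 2)) p =
      (cs.wordProd ω * p.1 * (cs.wordProd ω)⁻¹,
        p.2 + ((cs.rightInvSeq ω).count p.1 : ZMod 2)) := by
  induction ω with
  | nil => simp; rfl
  | cons i ω ih =>
    rw [List.map_cons, List.prod_cons]
    change sig cs i (((ω.map (sig cs)).prod : Function.End (W × ZMod 2)) p) = _
    rw [ih]
    have h : (cs.wordProd ω * p.1 * (cs.wordProd ω)⁻¹ = cs.simple i) ↔
        ((cs.wordProd ω)⁻¹ * cs.simple i * cs.wordProd ω = p.1) := by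
      constructor
      · intro h; rw [← h]; group
      · intro h; rw [← h]; group
    simp only [sig, rightInvSeq, List.count_cons, cs.wordProd_cons, h, beq_iff_eq]
    ext
    · simp [mul_assoc]
    · push_cast; simp [add_assoc]

theorem alt_prod {G : Type*} [Monoid G] (f : B → G) (i i' : B) (m : ℕ) :
    ((alternatingWord i i' (2 * m)).map f).prod = (f i * f i') ^ m := by
  induction m with
  | zero => simp [alternatingWord]
  | succ m ih =>
    rw [show 2 * (m + 1) = 2 * m + 1 + 1 by ring, alternatingWord_succ, alternatingWord_succ,
      pow_succ, ← ih]
    simp [mul_assoc]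

open Classical in
theorem count_even (L : List W) (m : ℕ) (hL : L.length = 2 * m)
    (h : ∀ k (hk : k < m), L[k + m]'(by omega) = L[k]'(by omega)) (t : W) :
    ((L.count t : ℕ) : ZMod 2) = 0 := by
  have h1 : L.drop m = L.take m := by
    apply List.ext_getElem
    · simp; omega
    · intro k h1 h2
      simp only [List.length_take] at h2
      rw [List.getElem_drop, List.getElem_take, ← h k (by omega)]
      congr 1; omega
  rw [← List.take_append_drop m L, h1, List.count_append]
  push_cast
  exact CharTwo.add_self_eq_zero _

theorem reverse_alt (i i' : B) (m : ℕ) :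
    (alternatingWord i i' (2 * m)).reverse = alternatingWord i' i (2 * m) := by
  induction m with
  | zero => simp [alternatingWord]
  | succ m ih =>
    rw [show 2 * (m + 1) = 2 * m + 1 + 1 by ring, alternatingWord_succ, alternatingWord_succ,
      alternatingWord_succ', alternatingWord_succ']
    simp [ih, Nat.even_add_one]

theorem liftable : M.IsLiftable (sig cs) := by
  classical
  intro i i'
  rw [← alt_prod]
  funext p
  rw [sig_word]
  have h1 : cs.wordProd (alternatingWord i i' (2 * M i i')) = 1 := by
    rw [wordProd, alt_prod]; simp
  have h2 : ((cs.rightInvSeq (alternatingWord i i' (2 * M i i'))).count p.1 : ZMod 2) = 0 := by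
    rw [← reverse_alt, rightInvSeq_reverse, List.count_reverse]
    refine count_even _ (M i i') ?_ ?_ _
    · rw [length_leftInvSeq, length_alternatingWord]
    · intro k hk
      rw [getElem_leftInvSeq_alternatingWord _ _ _ _ _ (by omega),
        getElem_leftInvSeq_alternatingWord _ _ _ _ _ (by omega)]
      rw [prod_alternatingWord_eq_mul_pow, prod_alternatingWord_eq_mul_pow]
      have e1 : (2 * (k + M i i') + 1) / 2 = k + M i i' := by omega
      have e2 : (2 * k + 1) / 2 = k := by omega
      rw [e1, e2, pow_add, simple_mul_simple_pow]
      simp [Nat.even_add_one]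
  rw [h1, h2]
  simp
  rfl

/-- The action. -/
noncomputable def act : W →* Function.End (W × ZMod 2) := cs.lift ⟨sig cs, liftable cs⟩

open Classical in
theorem act_word (ω : List B) (t : W) (e : ZMod 2) :
    act cs (cs.wordProd ω) (t, e) = (cs.wordProd ω * t * (cs.wordProd ω)⁻¹,
        e + ((cs.rightInvSeq ω).count t : ZMod 2)) := by
  rw [← sig_word cs ω (t, e), wordProd, map_list_prod, List.map_map]
  have h : (act cs : W → _) ∘ cs.simple = sig cs := by
    funext i
    exact cs.lift_apply_simple (liftable cs) i
  rw [h]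

theorem act_mul (v w : W) (p : W × ZMod 2) : act cs (v * w) p = act cs v (act cs w p) := by
  rw [map_mul]; rfl

theorem act_fst (w t : W) (e : ZMod 2) :
    act cs w (t, e) = (w * t * w⁻¹, e + (act cs w (t, 0)).2) := by
  classical
  obtain ⟨ω, rfl⟩ := cs.wordProd_surjective w
  rw [act_word, act_word]; simp

theorem act_refl {t : W} (ht : cs.IsReflection t) : act cs t (t, 0) = (t, 1) := by
  obtain ⟨u, i, rfl⟩ := ht
  set t := u * cs.simple i * u⁻¹ with ht
  have h1 : act cs u (act cs u⁻¹ (t, 0)) = (t, 0) := by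
    rw [← act_mul]; simp; rfl
  rw [act_fst cs u⁻¹] at h1
  have e1 : u⁻¹ * t * u⁻¹⁻¹ = cs.simple i := by rw [ht]; group
  rw [e1, act_fst cs u] at h1
  have h2 : act cs t (t, 0) = act cs u (act cs (cs.simple i) (act cs u⁻¹ (t, 0))) := by
    rw [← act_mul, ← act_mul]
  have h3 : ∀ e, act cs (cs.simple i) (cs.simple i, e) = (cs.simple i, e + 1) := by
    intro e
    simp [act, sig]
  rw [h2, act_fst cs u⁻¹, e1, h3, act_fst cs u]
  rw [Prod.ext_iff] at h1 ⊢
  simp only at h1 ⊢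
  refine ⟨h1.1, ?_⟩
  rw [add_right_comm, h1.2, zero_add]

theorem strong_exchange (ω : List B) {t : W} (ht : cs.IsReflection t)
    (h : cs.length (cs.wordProd ω * t) < cs.length (cs.wordProd ω)) :
    ∃ j < ω.length, cs.wordProd ω * t = cs.wordProd (ω.eraseIdx j) := by
  classical
  by_cases hm : t ∈ cs.rightInvSeq ω
  · obtain ⟨j, hj, rfl⟩ := List.mem_iff_getElem.mp hm
    refine ⟨j, by simpa using hj, ?_⟩
    rw [← List.getD_eq_getElem _ 1 hj, wordProd_mul_getD_rightInvSeq]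
  · exfalso
    obtain ⟨ω', hr, he⟩ := cs.exists_isReduced (cs.wordProd ω * t)
    have h0 := act_word cs ω t 1
    rw [List.count_eq_zero_of_not_mem hm] at h0
    have h1 : act cs (cs.wordProd ω * t) (t, 0) = act cs (cs.wordProd ω) (t, 1) := by
      rw [act_mul, act_refl cs ht]
    rw [h0, he, act_word] at h1
    have h2 : t ∈ cs.rightInvSeq ω' := by
      by_contra hn
      rw [List.count_eq_zero_of_not_mem hn] at h1
      simp at h1
    have h3 := (cs.isRightInversion_of_mem_rightInvSeq hr h2).2
    rw [← he, mul_assoc, ht.mul_self, mul_one] at h3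
    omega

theorem exchange_right (a b : W) {t : W} (ht : cs.IsReflection t)
    (h : cs.length (a * b * t) < cs.length (a * b)) :
    (∃ a', cs.length a' < cs.length a ∧ a * b * t = a' * b) ∨
    (∃ b', cs.length b' < cs.length b ∧ a * b * t = a * b') := by
  obtain ⟨α, hα, rfl⟩ := cs.exists_isReduced a
  obtain ⟨β, hβ, rfl⟩ := cs.exists_isReduced b
  rw [← wordProd_append] at h ⊢
  obtain ⟨j, hj, he⟩ := strong_exchange cs _ ht h
  rw [he]
  rw [List.length_append] at hj
  by_cases hja : j < α.length
  · left
    refine ⟨cs.wordProd (α.eraseIdx j), ?_, ?_⟩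
    · rw [hα.eq]
      refine (cs.length_wordProd_le _).trans_lt ?_
      rw [List.length_eraseIdx_of_lt hja]; omega
    · rw [List.eraseIdx_append_of_lt_length hja, wordProd_append]
  · right
    refine ⟨cs.wordProd (β.eraseIdx (j - α.length)), ?_, ?_⟩
    · rw [hβ.eq]
      refine (cs.length_wordProd_le _).trans_lt ?_
      rw [List.length_eraseIdx_of_lt (by omega)]; omega
    · rw [List.eraseIdx_append_of_length_le (by omega), wordProd_append]

theorem exchange_left (a b : W) {t : W} (ht : cs.IsReflection t)
    (h : cs.length (t * (a * b)) < cs.length (a * b)) :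
    (∃ a', cs.length a' < cs.length a ∧ t * (a * b) = a' * b) ∨
    (∃ b', cs.length b' < cs.length b ∧ t * (a * b) = a * b') := by
  have e : t * (a * b) = (b⁻¹ * a⁻¹ * t)⁻¹ := by
    simp [ht.inv]
  have h' : cs.length (b⁻¹ * a⁻¹ * t) < cs.length (b⁻¹ * a⁻¹) := by
    rw [e, length_inv] at h
    rwa [← mul_inv_rev, length_inv, mul_inv_rev]
  rcases exchange_right cs b⁻¹ a⁻¹ ht h' with ⟨c, hc, hc'⟩ | ⟨c, hc, hc'⟩
  · right
    refine ⟨c⁻¹, by simpa using hc, ?_⟩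
    rw [e, hc']; simp
  · left
    refine ⟨c⁻¹, by simpa using hc, ?_⟩
    rw [e, hc']; simp

theorem deletion (ω : List B) :
    ∃ ω' : List B, ω'.Sublist ω ∧ cs.IsReduced ω' ∧ cs.wordProd ω' = cs.wordProd ω := by
  induction ω with
  | nil => exact ⟨[], List.Sublist.refl _, by simp [CoxeterSystem.IsReduced], rfl⟩
  | cons i ω ih =>
    obtain ⟨ω', hs, hr, he⟩ := ih
    rcases cs.length_simple_mul (cs.wordProd ω') i with h | h
    · refine ⟨i :: ω', hs.cons_cons i, ?_, by rw [wordProd_cons, wordProd_cons, he]⟩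
      rw [CoxeterSystem.IsReduced, wordProd_cons, h, hr.eq]; simp
    · have h1 : cs.length (cs.wordProd ω'.reverse * cs.simple i) <
          cs.length (cs.wordProd ω'.reverse) := by
        have : cs.wordProd ω'.reverse * cs.simple i = (cs.simple i * cs.wordProd ω')⁻¹ := by
          simp
        rw [this, length_inv, wordProd_reverse, length_inv]; omega
      obtain ⟨j, hj, hje⟩ := strong_exchange cs _ (cs.isReflection_simple i) h1
      have h2 : cs.wordProd (ω'.reverse.eraseIdx j).reverse = cs.simple i * cs.wordProd ω' := by
        rw [wordProd_reverse, ← hje]; simp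
      refine ⟨(ω'.reverse.eraseIdx j).reverse, ?_, ?_, ?_⟩
      · have := (List.eraseIdx_sublist ω'.reverse j).reverse
        rw [List.reverse_reverse] at this
        exact (this.trans hs).cons i
      · rw [CoxeterSystem.IsReduced, h2, List.length_reverse, List.length_eraseIdx_of_lt hj,
          List.length_reverse, ← hr.eq]
        omega
      · rw [h2, wordProd_cons, he]

theorem bruhat_antisymm {u v : W} (h1 : cs.bruhatLE u v) (h2 : cs.bruhatLE v u) : u = v := by
  obtain ⟨l, hl, rfl, l', hs, hl', rfl⟩ := h1
  obtain ⟨k, hk, hke, k', hks, hk', hke'⟩ := h2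
  have a1 : l'.length = k.length := by rw [← hl'.eq, ← hk.eq, hke]
  have a2 : l.length = k'.length := by rw [← hl.eq, ← hk'.eq, hke']
  have a3 := hks.length_le
  rw [hs.eq_of_length_le (by omega)]

theorem wordProd_mem (J : Set B) (ω : List B) (h : ∀ i ∈ ω, i ∈ J) :
    cs.wordProd ω ∈ cs.parabolic J := by
  induction ω with
  | nil => simp
  | cons i ω ih =>
    rw [wordProd_cons]
    exact mul_mem (Subgroup.subset_closure ⟨i, h i (by simp), rfl⟩)
      (ih fun j hj => h j (by simp [hj]))

theorem exists_word (J : Set B) {a : W} (ha : a ∈ cs.parabolic J) :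
    ∃ ω : List B, (∀ i ∈ ω, i ∈ J) ∧ cs.IsReduced ω ∧ cs.wordProd ω = a := by
  have : ∃ ω : List B, (∀ i ∈ ω, i ∈ J) ∧ cs.wordProd ω = a := by
    unfold CoxeterSystem.parabolic at ha
    induction ha using Subgroup.closure_induction with
    | mem x hx => obtain ⟨i, hi, rfl⟩ := hx; exact ⟨[i], by simpa using hi, by simp⟩
    | one => exact ⟨[], by simp, by simp⟩
    | mul x y _ _ hx hy =>
      obtain ⟨p, hp, rfl⟩ := hx
      obtain ⟨q, hq, rfl⟩ := hy
      refine ⟨p ++ q, ?_, by simp [wordProd_append]⟩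
      intro i hi
      rcases List.mem_append.mp hi with h | h
      exacts [hp i h, hq i h]
    | inv x _ hx =>
      obtain ⟨p, hp, rfl⟩ := hx
      exact ⟨p.reverse, by simpa using hp, by simp⟩
  obtain ⟨ω, h1, rfl⟩ := this
  obtain ⟨ω', hs, hr, he⟩ := deletion cs ω
  exact ⟨ω', fun i hi => h1 i (hs.subset hi), hr, he⟩

/-- Every element of the double coset of a minimal `d` contains `d` in a reduced factorization. -/
theorem factor (J K : Set B) (d : W)
    (hd : ∀ x ∈ cs.doubleCoset J K d, cs.length d ≤ cs.length x)
    (x : W) (hx : x ∈ cs.doubleCoset J K d) :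
    ∃ α δ β : List B, (∀ i ∈ α, i ∈ J) ∧ (∀ i ∈ β, i ∈ K) ∧ cs.wordProd δ = d ∧
      cs.IsReduced δ ∧ cs.IsReduced (α ++ δ ++ β) ∧ cs.wordProd (α ++ δ ++ β) = x := by
  obtain ⟨p, hp, q, hq, rfl⟩ := hx
  obtain ⟨α, hα, -, rfl⟩ := exists_word cs J hp
  obtain ⟨β, hβ, -, rfl⟩ := exists_word cs K hq
  obtain ⟨δ, hδ, rfl⟩ := cs.exists_isReduced d
  obtain ⟨ω, hs, hr, he⟩ := deletion cs (α ++ δ ++ β)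
  obtain ⟨ω1, β', rfl, hs1, hsβ⟩ := List.sublist_append_iff.mp hs
  obtain ⟨α', δ', rfl, hsα, hsδ⟩ := List.sublist_append_iff.mp hs1
  have hα' : ∀ i ∈ α', i ∈ J := fun i hi => hα i (hsα.subset hi)
  have hβ' : ∀ i ∈ β', i ∈ K := fun i hi => hβ i (hsβ.subset hi)
  have e : δ' = δ := by
    apply hsδ.eq_of_length_le
    rw [← hδ.eq]
    refine (hd (cs.wordProd δ') ?_).trans (cs.length_wordProd_le _)
    refine ⟨(cs.wordProd α')⁻¹ * cs.wordProd α,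
      mul_mem (inv_mem (wordProd_mem cs J _ hα')) (wordProd_mem cs J _ hα),
      cs.wordProd β * (cs.wordProd β')⁻¹,
      mul_mem (wordProd_mem cs K _ hβ) (inv_mem (wordProd_mem cs K _ hβ')), ?_⟩
    simp only [wordProd_append] at he
    have : cs.wordProd δ' = (cs.wordProd α')⁻¹ *
        (cs.wordProd α' * cs.wordProd δ' * cs.wordProd β') * (cs.wordProd β')⁻¹ := by group
    rw [this, he]; group
  subst e
  exact ⟨α', δ', β', hα', hβ', rfl, hδ, hr, by rw [he]; simp [wordProd_append, mul_assoc]⟩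

theorem longest (J : Set B) (z : W)
    (hz : ∀ a ∈ cs.parabolic J, cs.length (a * z) ≤ cs.length z) (ω : List B)
    (hω : ∀ i ∈ ω, i ∈ J) (hr : cs.IsReduced ω) :
    cs.length (cs.wordProd ω * z) + ω.length = cs.length z := by
  induction ω with
  | nil => simp
  | cons i ω ih =>
    have hω' : ∀ j ∈ ω, j ∈ J := fun j hj => hω j (by simp [hj])
    have hr' : cs.IsReduced ω := by simpa using hr.drop 1
    have ih := ih hω' hr'
    have ha := wordProd_mem cs J ω hω'
    have hla := hr'.eq
    have hra : cs.length (cs.simple i * cs.wordProd ω) = ω.length + 1 := by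
      rw [← wordProd_cons, hr.eq]; simp
    rw [wordProd_cons]
    set a := cs.wordProd ω
    rw [mul_assoc, List.length_cons]
    rcases cs.length_simple_mul (a * z) i with h | h
    · exfalso
      have ht : cs.IsReflection (a⁻¹ * cs.simple i * a) := ⟨a⁻¹, i, by simp⟩
      have hs : cs.simple i ∈ cs.parabolic J := Subgroup.subset_closure ⟨i, hω i (by simp), rfl⟩
      have h1 := hz _ (mul_mem (mul_mem (inv_mem ha) hs) ha)
      have h2 := ht.length_mul_right_ne z
      have h3 : cs.length ((a⁻¹ * cs.simple i * a) * (a⁻¹ * (a * z))) <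
          cs.length (a⁻¹ * (a * z)) := by
        rw [inv_mul_cancel_left]; omega
      rcases exchange_left cs _ _ ht h3 with ⟨c, hc, he⟩ | ⟨c, hc, he⟩
      · have : (cs.simple i * a)⁻¹ = c := by
          have h5 := mul_right_cancel ((mul_assoc _ _ _).trans he)
          rw [← h5]; simp
        rw [← this, length_inv, length_inv] at hc
        omega
      · have : cs.simple i * (a * z) = c := by
          rw [inv_mul_cancel_left, mul_assoc, mul_assoc] at he
          exact mul_left_cancel he
        rw [← this] at hc
        omega
    · omega

theorem peel (K : Set B) (u : W) (hu : u ∈ cs.minLengthReps K) (m : W) (β : List B)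
    (hβ : ∀ i ∈ β, i ∈ K) (hl : cs.length (m * cs.wordProd β) = cs.length m + β.length)
    (c : W) (hc : m * cs.wordProd β = c * u)
    (hlc : cs.length (c * u) = cs.length c + cs.length u) :
    ∃ c', m = c' * u ∧ cs.length (c' * u) = cs.length c' + cs.length u := by
  induction β using List.reverseRecOn generalizing c with
  | nil => exact ⟨c, by simpa using hc, hlc⟩
  | append_singleton β k ih =>
    have hk : k ∈ K := hβ k (by simp)
    rw [wordProd_append, wordProd_singleton, ← mul_assoc] at hc hl
    rw [List.length_append, List.length_singleton] at hl
    have b1 : cs.length (m * cs.wordProd β) ≤ cs.length m + β.length :=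
      (cs.length_mul_le _ _).trans (Nat.add_le_add_left (cs.length_wordProd_le _) _)
    have b2 := cs.length_mul_simple (m * cs.wordProd β) k
    have e : c * u * cs.simple k = m * cs.wordProd β := by rw [← hc]; simp
    have h1 : cs.length (c * u * cs.simple k) < cs.length (c * u) := by
      rw [e, ← hc]; omega
    rcases exchange_right cs c u (cs.isReflection_simple k) h1 with ⟨c', hc', he⟩ | ⟨u', hu', he⟩
    · refine ih (fun i hi => hβ i (by simp [hi])) (by omega) c' (by rw [← e, he]) ?_
      have b3 := cs.length_mul_le c' u
      rw [← he, e] at b3 ⊢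
      rw [← hc] at hlc
      omega
    · exfalso
      rw [mul_assoc] at he
      have := mul_left_cancel he
      have h5 := hu (cs.simple k) (Subgroup.subset_closure ⟨k, hk, rfl⟩)
      rw [this] at h5
      omega

theorem bruhat_suffix (c u : W) (h : cs.length (c * u) = cs.length c + cs.length u) :
    cs.bruhatLE u (c * u) := by
  obtain ⟨α, hα, rfl⟩ := cs.exists_isReduced c
  obtain ⟨β, hβ, rfl⟩ := cs.exists_isReduced u
  refine ⟨α ++ β, ?_, wordProd_append _ _ _, β, List.sublist_append_right _ _, hβ, rfl⟩
  rw [CoxeterSystem.IsReduced, wordProd_append, h, hα.eq, hβ.eq, List.length_append]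

theorem dc_eq (J K : Set B) {w d : W} (hd : d ∈ cs.doubleCoset J K w) :
    cs.doubleCoset J K d = cs.doubleCoset J K w := by
  obtain ⟨p, hp, q, hq, rfl⟩ := hd
  ext x
  constructor
  · rintro ⟨a, ha, b, hb, rfl⟩
    exact ⟨a * p, mul_mem ha hp, q * b, mul_mem hq hb, by group⟩
  · rintro ⟨a, ha, b, hb, rfl⟩
    exact ⟨a * p⁻¹, mul_mem ha (inv_mem hp), q⁻¹ * b, mul_mem (inv_mem hq) hb, by group⟩

/-- Minimal-length elements exist in every nonempty set. -/
theorem exists_min (S : Set W) (h : S.Nonempty) :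
    ∃ d ∈ S, ∀ x ∈ S, cs.length d ≤ cs.length x := by
  obtain ⟨d, hd, hm⟩ := (measure cs.length).wf.has_min S h
  exact ⟨d, hd, fun x hx => not_lt.mp (hm x hx)⟩

theorem main [Finite W] (J K : Set B) (w : W) :
    (∃ wmin : W, wmin ∈ cs.doubleCoset J K w ∩ cs.minLengthReps K ∧
      ∀ u ∈ cs.doubleCoset J K w ∩ cs.minLengthReps K, cs.bruhatLE wmin u) ∧
    (∃ wmax : W, wmax ∈ cs.doubleCoset J K w ∩ cs.minLengthReps K ∧
      ∀ u ∈ cs.doubleCoset J K w ∩ cs.minLengthReps K, cs.bruhatLE u wmax) := by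
  obtain ⟨d, hdw, hmin⟩ := exists_min cs (cs.doubleCoset J K w)
    ⟨w, 1, one_mem _, 1, one_mem _, by simp⟩
  rw [← dc_eq cs J K hdw] at hmin ⊢
  clear hdw
  constructor
  · refine ⟨d, ⟨⟨1, one_mem _, 1, one_mem _, by simp⟩, ?_⟩, ?_⟩
    · intro b hb
      exact hmin _ ⟨1, one_mem _, b, hb, by simp⟩
    · rintro u ⟨hu, -⟩
      obtain ⟨α, δ, β, -, -, e, hδ, hr, hx⟩ := factor cs J K d hmin u hu
      exact ⟨_, hr, hx, δ, ((List.sublist_append_right α δ).trans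
        (List.sublist_append_left _ β)), hδ, e⟩
  · obtain ⟨z, ⟨p, hp, rfl⟩, hz⟩ := Set.exists_max_image {z : W | ∃ a ∈ cs.parabolic J, z = a * d}
      cs.length (Set.toFinite _) ⟨d, 1, one_mem _, by simp⟩
    obtain ⟨m, ⟨q, hq, rfl⟩, hm⟩ := exists_min cs
      {m : W | ∃ b ∈ cs.parabolic K, m = p * d * b} ⟨p * d, 1, one_mem _, by simp⟩
    refine ⟨p * d * q, ⟨⟨p, hp, q, hq, rfl⟩, ?_⟩, ?_⟩
    · intro b hb
      exact hm _ ⟨q * b, mul_mem hq hb, by group⟩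
    · rintro u ⟨hu, huK⟩
      obtain ⟨α, δ, β, hα, hβ, e, hδ, hr, hx⟩ := factor cs J K d hmin u hu
      have hβ0 : β = [] := by
        have h1 := huK _ (inv_mem (wordProd_mem cs K β hβ))
        have h2 : u * (cs.wordProd β)⁻¹ = cs.wordProd (α ++ δ) := by
          rw [← hx, wordProd_append]; group
        have h3 := cs.length_wordProd_le (α ++ δ)
        rw [h2, ← hx, hr.eq, List.length_append] at h1
        exact List.length_eq_zero_iff.mp (by omega)
      subst hβ0
      rw [List.append_nil, wordProd_append, e] at hx
      have haJ := wordProd_mem cs J α hα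
      have hcJ : cs.wordProd α * p⁻¹ ∈ cs.parabolic J := mul_mem haJ (inv_mem hp)
      obtain ⟨γ, hγ, hγr, hγe⟩ := exists_word cs J hcJ
      have hlong := longest cs J (p * d)
        (fun a ha => hz _ ⟨a * p, mul_mem ha hp, by group⟩) γ hγ hγr
      have hu' : cs.wordProd γ * (p * d) = u := by rw [hγe, ← hx]; group
      have hpd : p * d = (cs.wordProd γ)⁻¹ * u := by rw [← hu']; group
      rw [hu'] at hlong
      obtain ⟨β, hβ, hβr, hβe⟩ := exists_word cs K (inv_mem hq)
      have hmb : p * d * q * cs.wordProd β = p * d := by rw [hβe]; group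
      have hmin' := factor cs ∅ K (p * d * q) (by
        rintro x ⟨a, ha, b, hb, rfl⟩
        have ha1 : a = 1 := by simpa [CoxeterSystem.parabolic] using ha
        subst ha1
        exact hm _ ⟨q * b, mul_mem hq hb, by group⟩) (p * d)
        ⟨1, one_mem _, q⁻¹, inv_mem hq, by group⟩
      obtain ⟨α1, δ1, β1, hα1, hβ1, e1, hδ1, hr1, hx1⟩ := hmin'
      have hα0 : α1 = [] := List.eq_nil_iff_forall_not_mem.mpr fun i hi => hα1 i hi
      subst hα0
      rw [List.nil_append] at hr1 hx1
      rw [wordProd_append, e1] at hx1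
      have hl1 : cs.length (p * d * q * cs.wordProd β1) =
          cs.length (p * d * q) + β1.length := by
        rw [← e1, ← wordProd_append, hr1.eq, hδ1.eq, List.length_append]
      obtain ⟨c', hc', hlc'⟩ := peel cs K u huK (p * d * q) β1 hβ1 hl1 (cs.wordProd γ)⁻¹
        (by rw [hx1, hpd]) (by rw [← hpd, length_inv, hγr.eq]; omega)
      rw [hc']
      exact bruhat_suffix cs c' u hlc'

end BruhatAux

/-- In a finite Coxeter system, the intersection of a double coset `W_J · w · W_K`
with `W^K` has a unique Bruhat-minimal and a unique Bruhat-maximal element. -/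
theorem stmt_0 {B W : Type*} [Group W] [Finite W] {M : CoxeterMatrix B}
    (cs : CoxeterSystem M W) (J K : Set B) (w : W) :
    (∃! wmin : W, wmin ∈ cs.doubleCoset J K w ∩ cs.minLengthReps K ∧
      ∀ u ∈ cs.doubleCoset J K w ∩ cs.minLengthReps K, cs.bruhatLE wmin u) ∧
    (∃! wmax : W, wmax ∈ cs.doubleCoset J K w ∩ cs.minLengthReps K ∧
      ∀ u ∈ cs.doubleCoset J K w ∩ cs.minLengthReps K, cs.bruhatLE u wmax) := by
  obtain ⟨⟨a, ha, ha'⟩, ⟨b, hb, hb'⟩⟩ := BruhatAux.main cs J K w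
  refine ⟨⟨a, ⟨ha, ha'⟩, ?_⟩, ⟨b, ⟨hb, hb'⟩, ?_⟩⟩
  · rintro y ⟨hy, hy'⟩
    exact BruhatAux.bruhat_antisymm cs (hy' a ha) (ha' y hy)
  · rintro y ⟨hy, hy'⟩
    exact BruhatAux.bruhat_antisymm cs (hb' y hy) (hy' b hb)
end

section
/- Let n ≥ 1, 1 ≤ i ≤ n, 1 ≤ m ≤ n, and consider the symmetric group S_{n+1} of permutations of {1, …, n+1}. Let W_P = {σ ∈ S_{n+1} : σ({1,…,i}) = {1,…,i}} and W_Q = {σ ∈ S_{n+1} : σ({1,…,m}) = {1,…,m}}. Then two permutations σ, τ ∈ S_{n+1} lie in the same (W_P, W_Q) double coset if and only if #{j ∈ {1,…,m} : σ(j) ≤ i} = #{j ∈ {1,…,m} : τ(j) ≤ i}. -/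
theorem aux_image_iff {α : Type*} (h : Equiv.Perm α) (p : α → Prop) :
    (⇑h '' {j | p j} = {j | p j}) ↔ ∀ j, p (h j) ↔ p j := by
  constructor
  · intro H j
    have : h j ∈ ⇑h '' {j | p j} ↔ p (h j) := by rw [H]; rfl
    rw [← this, h.injective.mem_set_image]; rfl
  · intro H
    ext x
    constructor
    · rintro ⟨y, hy, rfl⟩
      exact (H y).2 hy
    · intro hx
      refine ⟨h.symm x, ?_, by simp⟩
      have := H (h.symm x)
      rw [Equiv.apply_symm_apply] at this
      exact this.1 hx

theorem aux_fiber {α β : Type*} [Fintype α] [DecidableEq β] (f g : α → β)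
    (H : ∀ b, (Finset.univ.filter (fun a => f a = b)).card
      = (Finset.univ.filter (fun a => g a = b)).card) :
    ∃ k : Equiv.Perm α, ∀ a, g (k a) = f a := by
  have e : ∀ b, Nonempty ({a // f a = b} ≃ {a // g a = b}) := fun b => by
    rw [← Fintype.card_eq, Fintype.card_subtype, Fintype.card_subtype]
    exact H b
  refine ⟨(Equiv.sigmaFiberEquiv f).symm.trans
    ((Equiv.sigmaCongrRight fun b => (e b).some).trans (Equiv.sigmaFiberEquiv g)), fun a => ?_⟩
  exact ((e (f a)).some ⟨a, rfl⟩).2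

theorem aux_counts {α : Type*} [Fintype α] (p q r : α → Prop) [DecidablePred p]
    [DecidablePred q] [DecidablePred r]
    (hq : (Finset.univ.filter q).card = (Finset.univ.filter r).card)
    (hpq : (Finset.univ.filter (fun a => p a ∧ q a)).card
      = (Finset.univ.filter (fun a => p a ∧ r a)).card) :
    ∃ k : Equiv.Perm α, ∀ a, (p (k a) ↔ p a) ∧ (r (k a) ↔ q a) := by
  have gen : ∀ (s t : α → Prop) [DecidablePred s] [DecidablePred t],
      (Finset.univ.filter (fun a => s a ∧ t a)).card
        + (Finset.univ.filter (fun a => s a ∧ ¬ t a)).card = (Finset.univ.filter s).card := by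
    intro s t _ _
    rw [← Finset.filter_filter, ← Finset.filter_filter]
    exact Finset.card_filter_add_card_filter_not _
  have a1 := gen p q
  have a2 := gen p r
  have a3 := gen q p
  have a4 := gen r p
  have a5 := gen (fun a => ¬ p a) q
  have a6 := gen (fun a => ¬ p a) r
  simp only [and_comm (a := q _), and_comm (a := r _)] at a3 a4
  obtain ⟨k, hk⟩ := aux_fiber (fun a => (decide (p a), decide (q a)))
    (fun a => (decide (p a), decide (r a))) (by
      rintro ⟨_ | _, _ | _⟩ <;> simp only [Prod.mk.injEq, decide_eq_true_eq, decide_eq_false_iff_not] <;> omega)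
  refine ⟨k, fun a => ?_⟩
  have := hk a
  simpa only [Prod.mk.injEq, decide_eq_decide] using this

/-- Two permutations of `{1, …, n+1}` (modelled as `Fin (n+1)`, with `{1,…,i}`
corresponding to `{j : (j : ℕ) < i}`) lie in the same `(W_P, W_Q)` double coset, where
`W_P` stabilizes `{1,…,i}` and `W_Q` stabilizes `{1,…,m}`, if and only if
`#{j ∈ {1,…,m} : σ(j) ≤ i}` agree. -/
theorem stmt_8 (n i m : ℕ) (hn : 1 ≤ n) (hi1 : 1 ≤ i) (hin : i ≤ n) (hm1 : 1 ≤ m)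
    (hmn : m ≤ n) (σ τ : Equiv.Perm (Fin (n + 1))) :
    (∃ h k : Equiv.Perm (Fin (n + 1)),
        (⇑h '' {j : Fin (n + 1) | (j : ℕ) < i} = {j : Fin (n + 1) | (j : ℕ) < i}) ∧
        (⇑k '' {j : Fin (n + 1) | (j : ℕ) < m} = {j : Fin (n + 1) | (j : ℕ) < m}) ∧
        τ = h * σ * k) ↔
      Set.ncard {j : Fin (n + 1) | (j : ℕ) < m ∧ ((σ j : Fin (n + 1)) : ℕ) < i}
        = Set.ncard {j : Fin (n + 1) | (j : ℕ) < m ∧ ((τ j : Fin (n + 1)) : ℕ) < i} := by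
  simp only [aux_image_iff _ (fun j : Fin (n + 1) => (j : ℕ) < i),
    aux_image_iff _ (fun j : Fin (n + 1) => (j : ℕ) < m)]
  constructor
  · rintro ⟨h, k, hh, hk, rfl⟩
    symm
    rw [← Set.ncard_image_of_injective _ k.injective]
    symm
    congr 1
    ext x
    constructor
    · rintro ⟨h1, h2⟩
      refine ⟨k.symm x, ⟨?_, ?_⟩, by simp⟩
      · have := hk (k.symm x)
        rw [Equiv.apply_symm_apply] at this
        exact this.1 h1
      · simpa [hh] using h2
    · rintro ⟨y, ⟨h1, h2⟩, rfl⟩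
      exact ⟨(hk y).2 h1, (hh _).1 h2⟩
  · intro H
    have key : ∀ ρ : Equiv.Perm (Fin (n + 1)),
        (Finset.univ.filter (fun j => ((ρ j : Fin (n + 1)) : ℕ) < i)).card
          = (Finset.univ.filter (fun j : Fin (n + 1) => (j : ℕ) < i)).card := by
      intro ρ
      rw [← Fintype.card_subtype, ← Fintype.card_subtype]
      exact Fintype.card_congr (ρ.subtypeEquiv fun _ => Iff.rfl)
    obtain ⟨k, hk⟩ := aux_counts (fun j : Fin (n + 1) => (j : ℕ) < m)
      (fun j => ((τ j : Fin (n + 1)) : ℕ) < i) (fun j => ((σ j : Fin (n + 1)) : ℕ) < i)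
      ((key τ).trans (key σ).symm) (by
        rw [← Set.ncard_coe_finset, ← Set.ncard_coe_finset]
        simpa using H.symm)
    refine ⟨τ * k⁻¹ * σ⁻¹, k, fun j => ?_, fun j => (hk j).1, by group⟩
    have := (hk (k⁻¹ (σ⁻¹ j))).2
    simpa using this.symm
end

section
/- Let n ≥ 2 and 1 ≤ m < n. In the hyperoctahedral group B_n, let W_P = {w ∈ B_n : w(1) = 1} and W_Q = {w ∈ B_n : w({1,…,m}) = {1,…,m}}. Then each of the three sets E_0 = {w : w(j) = −1 for some 1 ≤ j ≤ m}, E_1 = {w : w(j) ∉ {1, −1} for all 1 ≤ j ≤ m}, E_2 = {w : w(j) = 1 for some 1 ≤ j ≤ m} is nonempty and is a single (W_P, W_Q) double coset; in particular these three sets partition B_n and are exactly the (W_P, W_Q) double cosets. -/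
/-- The set `{−n, …, −1, 1, …, n}` of signed indices. -/
def SIdx (n : ℕ) : Type := {x : ℤ // x ≠ 0 ∧ x.natAbs ≤ n}

instance (n : ℕ) : Neg (SIdx n) :=
  ⟨fun x => ⟨-x.1, ⟨neg_ne_zero.mpr x.2.1, by simpa using x.2.2⟩⟩⟩

/-- Membership in the hyperoctahedral group `B_n`: a permutation `w` of
`{−n, …, −1, 1, …, n}` satisfying `w(−x) = −w(x)` for all `x`. -/
def IsSignedPerm {n : ℕ} (w : Equiv.Perm (SIdx n)) : Prop :=
  ∀ x : SIdx n, w (-x) = -(w x)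

/-- `W_P = {w ∈ B_n : w(1) = 1}`. -/
def InWP {n : ℕ} (h : Equiv.Perm (SIdx n)) : Prop :=
  IsSignedPerm h ∧ ∀ x : SIdx n, x.1 = 1 → (h x).1 = 1

/-- `W_Q = {w ∈ B_n : w({1,…,m}) = {1,…,m}}`. -/
def InWQ {n : ℕ} (m : ℕ) (k : Equiv.Perm (SIdx n)) : Prop :=
  IsSignedPerm k ∧
    ⇑k '' {x : SIdx n | 0 < x.1 ∧ x.1 ≤ (m : ℤ)} = {x : SIdx n | 0 < x.1 ∧ x.1 ≤ (m : ℤ)}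

/-- `w` and `w'` lie in the same `(W_P, W_Q)` double coset. -/
def SameDC {n : ℕ} (m : ℕ) (w w' : Equiv.Perm (SIdx n)) : Prop :=
  ∃ h k : Equiv.Perm (SIdx n), InWP h ∧ InWQ m k ∧ w' = h * w * k

/-- `E_0 = {w : w(j) = −1 for some 1 ≤ j ≤ m}`. -/
def InE0 {n : ℕ} (m : ℕ) (w : Equiv.Perm (SIdx n)) : Prop :=
  ∃ j : SIdx n, 0 < j.1 ∧ j.1 ≤ (m : ℤ) ∧ (w j).1 = -1

/-- `E_1 = {w : w(j) ∉ {1, −1} for all 1 ≤ j ≤ m}`. -/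
def InE1 {n : ℕ} (m : ℕ) (w : Equiv.Perm (SIdx n)) : Prop :=
  ∀ j : SIdx n, 0 < j.1 → j.1 ≤ (m : ℤ) → (w j).1 ≠ 1 ∧ (w j).1 ≠ -1

/-- `E_2 = {w : w(j) = 1 for some 1 ≤ j ≤ m}`. -/
def InE2 {n : ℕ} (m : ℕ) (w : Equiv.Perm (SIdx n)) : Prop :=
  ∃ j : SIdx n, 0 < j.1 ∧ j.1 ≤ (m : ℤ) ∧ (w j).1 = 1

theorem SIdx.ext' {n : ℕ} {x y : SIdx n} (h : x.1 = y.1) : x = y := Subtype.ext h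

theorem SIdx.neg_neg' {n : ℕ} (x : SIdx n) : - -x = x := SIdx.ext' (neg_neg x.1)

theorem SIdx.neg_val {n : ℕ} (x : SIdx n) : (-x).1 = -x.1 := rfl

theorem SIdx.ne_neg {n : ℕ} (x : SIdx n) : x ≠ -x := by
  intro h
  have h1 := congrArg Subtype.val h
  have h2 := x.2.1
  rw [SIdx.neg_val] at h1
  omega

/-- Membership in `{1, …, m}`. -/
def InS {n : ℕ} (m : ℕ) (x : SIdx n) : Prop := 0 < x.1 ∧ x.1 ≤ (m : ℤ)

open Classical in
/-- The underlying function of the signed transposition. -/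
noncomputable def sswFun {n : ℕ} (a b x : SIdx n) : SIdx n :=
  if x = a then b else if x = b then a else if x = -a then -b else if x = -b then -a else x

theorem sswFun_invol {n : ℕ} (a b x : SIdx n) : sswFun a b (sswFun a b x) = x := by
  have h1 := SIdx.neg_neg' a
  have h2 := SIdx.neg_neg' b
  have h3 := SIdx.ne_neg a
  have h4 := SIdx.ne_neg b
  unfold sswFun
  grind

theorem sswFun_neg {n : ℕ} (a b x : SIdx n) : sswFun a b (-x) = -(sswFun a b x) := by
  have h1 := SIdx.neg_neg' a
  have h2 := SIdx.neg_neg' b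
  have h3 := SIdx.ne_neg a
  have h4 := SIdx.ne_neg b
  have h5 := SIdx.neg_neg' x
  unfold sswFun
  grind

/-- The signed transposition exchanging `a` and `b`. -/
noncomputable def ssw {n : ℕ} (a b : SIdx n) : Equiv.Perm (SIdx n) :=
  ⟨sswFun a b, sswFun a b, sswFun_invol a b, sswFun_invol a b⟩

theorem ssw_apply {n : ℕ} (a b x : SIdx n) : ssw a b x = sswFun a b x := rfl

theorem ssw_signed {n : ℕ} (a b : SIdx n) : IsSignedPerm (ssw a b) := sswFun_neg a b

theorem ssw_left {n : ℕ} (a b : SIdx n) : ssw a b a = b := by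
  rw [ssw_apply, sswFun, if_pos rfl]

theorem not_InS_neg {n m : ℕ} {x : SIdx n} (h : InS m x) : ¬ InS m (-x) := by
  intro h'
  have h1 := h.1
  have h2 := h'.1
  rw [SIdx.neg_val] at h2
  omega

theorem ssw_InWQ {n m : ℕ} (a b : SIdx n) (h1 : InS m a ↔ InS m b)
    (h2 : InS m (-a) ↔ InS m (-b)) : InWQ m (ssw a b) := by
  have key : ∀ x, InS m x → InS m (ssw a b x) := by
    intro x hx
    rw [ssw_apply, sswFun]
    split_ifs with c1 c2 c3 c4
    · exact h1.1 (c1 ▸ hx)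
    · exact h1.2 (c2 ▸ hx)
    · exact h2.1 (c3 ▸ hx)
    · exact h2.2 (c4 ▸ hx)
    · exact hx
  refine ⟨ssw_signed a b, Set.Subset.antisymm ?_ ?_⟩
  · rintro _ ⟨x, hx, rfl⟩
    exact key x hx
  · intro x hx
    exact ⟨ssw a b x, key x hx, sswFun_invol a b x⟩

theorem InWQ.mem_iff {n m : ℕ} {k : Equiv.Perm (SIdx n)} (hk : InWQ m k) (x : SIdx n) :
    InS m (k x) ↔ InS m x := by
  have h := hk.2
  constructor
  · intro hx
    have hx' : k x ∈ {x : SIdx n | 0 < x.1 ∧ x.1 ≤ (m : ℤ)} := hx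
    rw [← h] at hx'
    obtain ⟨y, hy, e⟩ := hx'
    rw [← k.injective e]
    exact hy
  · intro hx
    have hx' : k x ∈ k '' {x : SIdx n | 0 < x.1 ∧ x.1 ≤ (m : ℤ)} := ⟨x, hx, rfl⟩
    rw [h] at hx'
    exact hx'

theorem symm_neg {n : ℕ} {w : Equiv.Perm (SIdx n)} (hw : IsSignedPerm w) (x : SIdx n) :
    w.symm (-x) = -(w.symm x) := by
  rw [Equiv.symm_apply_eq, hw, Equiv.apply_symm_apply]

/-- Two signed permutations are in the same double coset iff the preimages of `1` have the
same type with respect to `{1, …, m}`. -/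
theorem sameDC_iff {n m : ℕ} (o : SIdx n) (ho : o.1 = 1) {w w' : Equiv.Perm (SIdx n)}
    (hw : IsSignedPerm w) (hw' : IsSignedPerm w') :
    SameDC m w w' ↔ ((InS m (w.symm o) ↔ InS m (w'.symm o)) ∧
      (InS m (-(w.symm o)) ↔ InS m (-(w'.symm o)))) := by
  constructor
  · rintro ⟨h, k, hh, hk, rfl⟩
    have e1 : h o = o := SIdx.ext' (by rw [hh.2 o ho, ho])
    have e2 : k ((h * w * k).symm o) = w.symm o := by
      apply w.injective
      apply h.injective
      rw [Equiv.apply_symm_apply, e1]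
      exact Equiv.apply_symm_apply (h * w * k) o
    rw [← e2, ← hk.1, hk.mem_iff, hk.mem_iff]
    exact ⟨Iff.rfl, Iff.rfl⟩
  · rintro ⟨h1, h2⟩
    have hk := ssw_InWQ (w.symm o) (w'.symm o) h1 h2
    have e := ssw_left (w.symm o) (w'.symm o)
    have hinv : ∀ x, ssw (w.symm o) (w'.symm o) (ssw (w.symm o) (w'.symm o) x) = x :=
      sswFun_invol _ _
    generalize ssw (w.symm o) (w'.symm o) = k at hk e hinv
    refine ⟨w' * k * w⁻¹, k, ⟨?_, ?_⟩, hk, ?_⟩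
    · intro x
      change w' (k (w.symm (-x))) = -(w' (k (w.symm x)))
      rw [symm_neg hw, hk.1, hw']
    · intro x hx
      have hxo : x = o := SIdx.ext' (hx.trans ho.symm)
      change (w' (k (w.symm x))).1 = 1
      rw [hxo, e, Equiv.apply_symm_apply, ho]
    · ext x
      change w' x = w' (k (w.symm (w (k x))))
      rw [Equiv.symm_apply_apply, hinv]

theorem E2_iff {n m : ℕ} (o : SIdx n) (ho : o.1 = 1) (w : Equiv.Perm (SIdx n)) :
    InE2 m w ↔ InS m (w.symm o) := by
  constructor
  · rintro ⟨j, h1, h2, h3⟩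
    have e : w j = o := SIdx.ext' (h3.trans ho.symm)
    rw [← e, Equiv.symm_apply_apply]
    exact ⟨h1, h2⟩
  · intro h
    exact ⟨_, h.1, h.2, by rw [Equiv.apply_symm_apply, ho]⟩

theorem E0_iff {n m : ℕ} (o : SIdx n) (ho : o.1 = 1) {w : Equiv.Perm (SIdx n)}
    (hw : IsSignedPerm w) : InE0 m w ↔ InS m (-(w.symm o)) := by
  rw [← symm_neg hw]
  have ho' : (-o).1 = -1 := by rw [SIdx.neg_val, ho]
  constructor
  · rintro ⟨j, h1, h2, h3⟩
    have e : w j = -o := SIdx.ext' (h3.trans ho'.symm)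
    rw [← e, Equiv.symm_apply_apply]
    exact ⟨h1, h2⟩
  · intro h
    exact ⟨_, h.1, h.2, by rw [Equiv.apply_symm_apply, ho']⟩

theorem E1_iff {n m : ℕ} (w : Equiv.Perm (SIdx n)) :
    InE1 m w ↔ ¬ InE0 m w ∧ ¬ InE2 m w := by
  unfold InE1 InE0 InE2
  constructor
  · intro h
    exact ⟨fun ⟨j, a, b, c⟩ => (h j a b).2 c, fun ⟨j, a, b, c⟩ => (h j a b).1 c⟩
  · rintro ⟨h, h'⟩ j a b
    exact ⟨fun c => h' ⟨j, a, b, c⟩, fun c => h ⟨j, a, b, c⟩⟩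

/-- For `n ≥ 2`, `1 ≤ m < n`, the sets `E_0`, `E_1`, `E_2` are nonempty, each is a single
`(W_P, W_Q)` double coset, and they partition `B_n` (so they are exactly the double cosets). -/
theorem stmt_9 (n m : ℕ) (hn : 2 ≤ n) (hm1 : 1 ≤ m) (hmn : m < n) :
    ((∃ w : Equiv.Perm (SIdx n), IsSignedPerm w ∧ InE0 m w) ∧
     (∃ w : Equiv.Perm (SIdx n), IsSignedPerm w ∧ InE1 m w) ∧
     (∃ w : Equiv.Perm (SIdx n), IsSignedPerm w ∧ InE2 m w)) ∧
    ((∀ w w' : Equiv.Perm (SIdx n), IsSignedPerm w → IsSignedPerm w' →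
        InE0 m w → (InE0 m w' ↔ SameDC m w w')) ∧
     (∀ w w' : Equiv.Perm (SIdx n), IsSignedPerm w → IsSignedPerm w' →
        InE1 m w → (InE1 m w' ↔ SameDC m w w')) ∧
     (∀ w w' : Equiv.Perm (SIdx n), IsSignedPerm w → IsSignedPerm w' →
        InE2 m w → (InE2 m w' ↔ SameDC m w w'))) ∧
    ((∀ w : Equiv.Perm (SIdx n), IsSignedPerm w → (InE0 m w ∨ InE1 m w ∨ InE2 m w)) ∧
     (∀ w : Equiv.Perm (SIdx n), IsSignedPerm w →
        ¬(InE0 m w ∧ InE1 m w) ∧ ¬(InE0 m w ∧ InE2 m w) ∧ ¬(InE1 m w ∧ InE2 m w))) := by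
  obtain ⟨o, ho⟩ : ∃ o : SIdx n, o.1 = 1 :=
    ⟨⟨1, one_ne_zero, by simp; omega⟩, rfl⟩
  obtain ⟨l, hl⟩ : ∃ l : SIdx n, l.1 = (n : ℤ) :=
    ⟨⟨(n : ℤ), by omega, by simp⟩, rfl⟩
  have hoS : InS m o := ⟨by omega, by omega⟩
  have excl : ∀ w : Equiv.Perm (SIdx n), InS m (w.symm o) → ¬ InS m (-(w.symm o)) :=
    fun w h => not_InS_neg h
  refine ⟨⟨⟨ssw o (-o), ssw_signed _ _, ?_⟩, ⟨ssw o l, ssw_signed _ _, ?_⟩,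
    ⟨1, fun x => rfl, ?_⟩⟩, ⟨?_, ?_, ?_⟩, ?_, ?_⟩
  · exact ⟨o, hoS.1, hoS.2, by rw [ssw_left, SIdx.neg_val, ho]⟩
  · have e : (ssw o l).symm o = l := ssw_left o l
    rw [E1_iff, E0_iff o ho (ssw_signed _ _), E2_iff o ho, e]
    constructor
    · intro h
      have := h.1
      rw [SIdx.neg_val] at this
      omega
    · intro h
      have := h.2
      omega
  · exact ⟨o, hoS.1, hoS.2, ho⟩
  · intro w w' hw hw' h
    have := excl w
    have := excl w'
    rw [sameDC_iff o ho hw hw']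
    rw [E0_iff o ho hw] at h
    rw [E0_iff o ho hw']
    tauto
  · intro w w' hw hw' h
    rw [sameDC_iff o ho hw hw']
    rw [E1_iff, E0_iff o ho hw, E2_iff o ho] at h
    rw [E1_iff, E0_iff o ho hw', E2_iff o ho]
    tauto
  · intro w w' hw hw' h
    have := excl w
    have := excl w'
    rw [sameDC_iff o ho hw hw']
    rw [E2_iff o ho] at h
    rw [E2_iff o ho]
    tauto
  · intro w hw
    rw [E1_iff]
    tauto
  · intro w hw
    have := excl w
    rw [E1_iff, E0_iff o ho hw, E2_iff o ho]
    tauto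
end

section
/- Let Φ be a reduced crystallographic root system with base Δ = {α_1, …, α_n}, Weyl group W, and fix 1 ≤ m ≤ n. Let Φ_Q = Φ ∩ span{α_j : j ≠ m}, Φ_Q⁺ = Φ_Q ∩ Φ⁺, and for w ∈ W set ℓ_Q(w) = #{α ∈ Φ⁺ \ Φ_Q⁺ : w(α) ∈ Φ⁻}. If α₀ ∈ Φ⁺ and w ∈ W satisfy ℓ_Q(s_{α₀} w) = ℓ_Q(w) + 1, then there exists β₀ ∈ Φ⁺ \ Φ_Q⁺ with w(β₀) = α₀. -/
open Module

/-- The set `Φ⁺` of positive roots: roots that are nonnegative integral combinations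
of the simple roots `α_1, …, α_n`. -/
def rsPos {V : Type*} [AddCommGroup V] [Module ℝ V] {n : ℕ}
    (Φ : Set V) (α : Fin n → V) : Set V :=
  {β | β ∈ Φ ∧ ∃ c : Fin n → ℤ, (∀ p, 0 ≤ c p) ∧ β = ∑ p, (c p : ℝ) • α p}

/-- The set `Φ_Q⁺ = Φ_Q ∩ Φ⁺`, where `Φ_Q = Φ ∩ span{α_j : j ≠ m}`. -/
def rsQPos {V : Type*} [AddCommGroup V] [Module ℝ V] {n : ℕ}
    (Φ : Set V) (α : Fin n → V) (m : Fin n) : Set V :=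
  {β | β ∈ rsPos Φ α ∧ β ∈ Submodule.span ℝ (α '' {j | j ≠ m})}

/-- `ℓ_Q(w) = #{α ∈ Φ⁺ \ Φ_Q⁺ : w(α) ∈ Φ⁻}`. -/
noncomputable def rsLenQ {V : Type*} [AddCommGroup V] [Module ℝ V] {n : ℕ}
    (Φ : Set V) (α : Fin n → V) (m : Fin n) (u : V ≃ₗ[ℝ] V) : ℕ :=
  Set.ncard {β | β ∈ rsPos Φ α ∧ β ∉ rsQPos Φ α m ∧ -(u β) ∈ rsPos Φ α}

/-- For a reduced crystallographic root system `Φ` with base `α_1, …, α_n` and Weyl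
group `W`: if `α₀ ∈ Φ⁺` and `w ∈ W` satisfy `ℓ_Q(s_{α₀} w) = ℓ_Q(w) + 1`, then there
is `β₀ ∈ Φ⁺ \ Φ_Q⁺` with `w(β₀) = α₀`. -/
theorem stmt_15 {V : Type*} [AddCommGroup V] [Module ℝ V] (n : ℕ)
    (Φ : Set V) (hfin : Φ.Finite) (hspan : Submodule.span ℝ Φ = ⊤)
    (hreduced : ∀ β ∈ Φ, ∀ c : ℝ, c • β ∈ Φ → c = 1 ∨ c = -1)
    (cor : V → Module.Dual ℝ V)
    (hcor2 : ∀ β ∈ Φ, cor β β = 2)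
    (hcrys : ∀ β ∈ Φ, ∀ γ ∈ Φ, ∃ k : ℤ, cor γ β = (k : ℝ))
    (s : V → (V ≃ₗ[ℝ] V))
    (hs : ∀ β ∈ Φ, ∀ x : V, s β x = x - cor β x • β)
    (hsΦ : ∀ β ∈ Φ, ∀ γ ∈ Φ, s β γ ∈ Φ)
    (α : Fin n → V) (hα : ∀ p, α p ∈ Φ) (hind : LinearIndependent ℝ α)
    (hbase : ∀ β ∈ Φ,
      (∃ c : Fin n → ℤ, (∀ p, 0 ≤ c p) ∧ β = ∑ p, (c p : ℝ) • α p) ∨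
      (∃ c : Fin n → ℤ, (∀ p, c p ≤ 0) ∧ β = ∑ p, (c p : ℝ) • α p))
    (m : Fin n)
    (α₀ : V) (hα₀ : α₀ ∈ rsPos Φ α)
    (w : V ≃ₗ[ℝ] V) (hw : w ∈ Subgroup.closure {x : V ≃ₗ[ℝ] V | ∃ β ∈ Φ, x = s β})
    (hlen : rsLenQ Φ α m (s α₀ * w) = rsLenQ Φ α m w + 1) :
    ∃ β₀ : V, β₀ ∈ rsPos Φ α ∧ β₀ ∉ rsQPos Φ α m ∧ w β₀ = α₀ := by
  classical
  have hαspan : ⊤ ≤ Submodule.span ℝ (Set.range α) := by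
    rw [← hspan, Submodule.span_le]
    intro β hβ
    have key : ∀ c : Fin n → ℤ, ∑ p, (c p : ℝ) • α p ∈ Submodule.span ℝ (Set.range α) :=
      fun c => Submodule.sum_mem _ fun p _ =>
        Submodule.smul_mem _ _ (Submodule.subset_span ⟨p, rfl⟩)
    rcases hbase β hβ with ⟨c, -, rfl⟩ | ⟨c, -, rfl⟩ <;> exact key c
  let b : Basis (Fin n) ℝ V := Basis.mk hind hαspan
  have hb : ∀ p, b p = α p := fun p => Basis.mk_apply hind hαspan p
  have hcoord : ∀ (c : Fin n → ℤ) (p : Fin n), b.coord p (∑ q, (c q : ℝ) • α q) = c p := by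
    intro c p
    simp only [← hb]
    simp [Finsupp.single_apply]
  have hrepr : ∀ x, x = ∑ p, b.coord p x • α p := by
    intro x
    have := b.sum_repr x
    simp only [hb] at this
    exact this.symm
  have hposIff : ∀ x, x ∈ rsPos Φ α ↔ x ∈ Φ ∧ ∀ p, 0 ≤ b.coord p x := by
    intro x
    constructor
    · rintro ⟨hx, c, hc, rfl⟩
      refine ⟨hx, fun p => ?_⟩
      rw [hcoord]
      exact_mod_cast hc p
    · rintro ⟨hx, h⟩
      refine ⟨hx, ?_⟩
      rcases hbase x hx with ⟨c, -, rfl⟩ | ⟨c, -, rfl⟩ <;>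
      · refine ⟨c, fun p => ?_, rfl⟩
        have := h p
        rw [hcoord] at this
        exact_mod_cast this
  have hspan0 : ∀ x ∈ Submodule.span ℝ (α '' {j | j ≠ m}), b.coord m x = 0 := by
    intro x hx
    have : Submodule.span ℝ (α '' {j | j ≠ m}) ≤ LinearMap.ker (b.coord m) := by
      rw [Submodule.span_le]
      rintro _ ⟨j, hj, rfl⟩
      have hj' : j ≠ m := hj
      simp [← hb, Finsupp.single_apply, hj']
    exact this hx
  have hPIff : ∀ x, (x ∈ rsPos Φ α ∧ x ∉ rsQPos Φ α m) ↔ x ∈ Φ ∧ 0 < b.coord m x := by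
    intro x
    constructor
    · rintro ⟨hx, hq⟩
      have h := (hposIff x).1 hx
      refine ⟨h.1, lt_of_le_of_ne (h.2 m) fun h0 => hq ⟨hx, ?_⟩⟩
      rw [hrepr x]
      refine Submodule.sum_mem _ fun p _ => ?_
      by_cases hp : p = m
      · subst hp
        rw [← h0, zero_smul]
        exact Submodule.zero_mem _
      · exact Submodule.smul_mem _ _ (Submodule.subset_span ⟨p, hp, rfl⟩)
    · rintro ⟨hx, hm⟩
      refine ⟨⟨hx, ?_⟩, fun hq => hm.ne' (hspan0 x hq.2)⟩
      rcases hbase x hx with h | ⟨c, hc, rfl⟩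
      · exact h
      · rw [hcoord] at hm
        have h1 : 0 < c m := by exact_mod_cast hm
        exact absurd (hc m) (not_le.2 h1)
  have hinvol : ∀ β ∈ Φ, ∀ x, s β (s β x) = x := by
    intro β hβ x
    rw [hs β hβ, hs β hβ x, map_sub, map_smul, hcor2 β hβ, smul_eq_mul]
    module
  have hneg : ∀ β ∈ Φ, -β ∈ Φ := by
    intro β hβ
    have h := hsΦ β hβ β hβ
    rw [hs β hβ, hcor2 β hβ] at h
    convert h using 1
    module
  have hwΦ : ∀ x, w x ∈ Φ ↔ x ∈ Φ := by
    clear hlen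
    induction hw using Subgroup.closure_induction with
    | mem u hu =>
      obtain ⟨β, hβ, rfl⟩ := hu
      intro x
      refine ⟨fun h => ?_, hsΦ β hβ x⟩
      have := hsΦ β hβ _ h
      rwa [hinvol β hβ] at this
    | one => intro x; rfl
    | mul u v _ _ hu hv => exact fun x => (hu (v x)).trans (hv x)
    | inv u _ hu =>
      intro x
      rw [← hu (u⁻¹ x)]
      have : u (u⁻¹ x) = x := u.apply_symm_apply x
      rw [this]
  have hα₀Φ : α₀ ∈ Φ := hα₀.1
  by_contra hcon
  set γ := w.symm α₀ with hγ
  have hwγ : w γ = α₀ := w.apply_symm_apply α₀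
  have hγΦ : γ ∈ Φ := (hwΦ γ).1 (hwγ ▸ hα₀Φ)
  have hγm : b.coord m γ ≤ 0 := by
    by_contra h
    have := (hPIff γ).2 ⟨hγΦ, not_le.1 h⟩
    exact hcon ⟨γ, this.1, this.2, hwγ⟩
  let t : V → V := fun x => w.symm (s α₀ (w x))
  have hwt : ∀ x, w (t x) = s α₀ (w x) := fun x => w.apply_symm_apply _
  have htt : ∀ x, t (t x) = x := by
    intro x
    apply w.injective
    rw [hwt, hwt, hinvol α₀ hα₀Φ]
  have ht : ∀ x, t x = x - cor α₀ (w x) • γ := by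
    intro x
    apply w.injective
    rw [hwt, hs α₀ hα₀Φ, map_sub, map_smul, hwγ]
  have htΦ : ∀ x ∈ Φ, t x ∈ Φ := by
    intro x hx
    rw [← hwΦ, hwt]
    exact hsΦ _ hα₀Φ _ ((hwΦ x).2 hx)
  have hle : rsLenQ Φ α m (s α₀ * w) ≤ rsLenQ Φ α m w := by
    unfold rsLenQ
    refine Set.ncard_le_ncard_of_injOn
      (fun β => if 0 < b.coord m (t β) then t β else β) ?_ ?_ ?_
    · rintro β ⟨h1, h2, h3⟩
      have hβ := (hPIff β).1 ⟨h1, h2⟩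
      have h3' : -(s α₀ (w β)) ∈ rsPos Φ α := h3
      by_cases hc : 0 < b.coord m (t β)
      · simp only [hc, if_true]
        have := (hPIff _).2 ⟨htΦ β hβ.1, hc⟩
        refine ⟨this.1, this.2, ?_⟩
        rw [hwt]
        exact h3'
      · simp only [hc, if_false]
        refine ⟨h1, h2, ?_⟩
        rw [hposIff] at h3' ⊢
        refine ⟨hneg _ ((hwΦ β).2 hβ.1), fun p => ?_⟩
        have e1 := h3'.2 p
        have e2 := ((hposIff _).1 hα₀).2 p
        rw [hs α₀ hα₀Φ] at e1
        rw [ht] at hc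
        simp only [map_sub, map_neg, map_smul, smul_eq_mul] at e1 hc ⊢
        have hk : cor α₀ (w β) ≤ 0 := by
          by_contra hk
          nlinarith [mul_nonneg (not_le.1 hk).le (neg_nonneg.2 hγm), hβ.2]
        nlinarith [mul_nonneg (neg_nonneg.2 hk) e2]
    · rintro x ⟨hx1, hx2, -⟩ y ⟨hy1, hy2, -⟩ hxy
      have hx := (hPIff x).1 ⟨hx1, hx2⟩
      have hy := (hPIff y).1 ⟨hy1, hy2⟩
      by_cases hcx : 0 < b.coord m (t x) <;> by_cases hcy : 0 < b.coord m (t y) <;>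
        simp only [hcx, hcy, if_true, if_false] at hxy
      · rw [← htt x, hxy, htt]
      · rw [← hxy, htt] at hcy
        exact absurd hx.2 hcy
      · rw [hxy, htt] at hcx
        exact absurd hy.2 hcx
      · exact hxy
    · exact hfin.subset fun x hx => hx.1.1
  omega
end
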